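/- Let β ∈ (1,2) with δ(β) = (1^m 0)^∞ for some m ≥ 1, and let [t_L, t_R) ⊂ [0, 1 − 1/β) be a β-Lyndon interval. Then the set-valued map t ↦ K̃_β(t) is constant on [t_L, t_R]; in particular K̃_β(t) = K̃_β(t_L) = K̃_β(t_R) for every t ∈ [t_L, t_R]. -/

import Mathlib

open Set Filter MeasureTheory

/-- The β-transformation `x ↦ βx (mod 1)`. -/
noncomputable def Tbeta (β x : ℝ) : ℝ := Int.fract (β * x)

/-- The survivor set `K_β(t) = {x ∈ [0,1) : T_β^n x ≥ t for all n ≥ 0}`. -/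
def Kset (β t : ℝ) : Set ℝ := {x | x ∈ Set.Ico (0 : ℝ) 1 ∧ ∀ n : ℕ, t ≤ (Tbeta β)^[n] x}

/-- Strict lexicographic order on sequences of naturals. -/
def seqLt (x y : ℕ → ℕ) : Prop := ∃ n, (∀ i, i < n → x i = y i) ∧ x n < y n

/-- Lexicographic order on sequences of naturals. -/
def seqLe (x y : ℕ → ℕ) : Prop := x = y ∨ seqLt x y

/-- The `n`-th iterate of the left shift. -/
def shiftN (n : ℕ) (x : ℕ → ℕ) : ℕ → ℕ := fun i => x (i + n)

/-- The sequence `w 0^∞`. -/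
def wordSeq (w : List ℕ) : ℕ → ℕ := fun i => w.getD i 0

/-- The periodic sequence `w^∞`. -/
def perSeq (w : List ℕ) : ℕ → ℕ := fun i => w.getD (i % w.length) 0

/-- The sequence obtained by concatenating the word `w` with the sequence `x`. -/
def catSeq (w : List ℕ) (x : ℕ → ℕ) : ℕ → ℕ :=
  fun i => if i < w.length then w.getD i 0 else x (i - w.length)

/-- The greedy β-expansion of `t`: the digit `b_{i+1}` is `⌊β T_β^i t⌋`. -/
noncomputable def greedy (β t : ℝ) : ℕ → ℕ := fun i => (⌊β * (Tbeta β)^[i] t⌋).toNat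

/-- `d` is the quasi-greedy β-expansion of `1`: the lexicographically largest
sequence in `{0,1}^ℕ` not ending in `0^∞` whose digits sum to `1` in base `β`. -/
def IsQuasiGreedy (β : ℝ) (d : ℕ → ℕ) : Prop :=
  (∀ i, d i ≤ 1) ∧ (¬ ∃ N, ∀ n, N ≤ n → d n = 0) ∧
  (∑' i : ℕ, (d i : ℝ) / β ^ (i + 1) = 1) ∧
  ∀ e : ℕ → ℕ, (∀ i, e i ≤ 1) → (¬ ∃ N, ∀ n, N ≤ n → e n = 0) →
    (∑' i : ℕ, (e i : ℝ) / β ^ (i + 1) = 1) → seqLe e d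

/-- `s = s_1…s_p` is a β-Lyndon word: `s_{i+1}…s_p ≻ s_1…s_{p-i}` for `1 ≤ i < p`
and `σ^n(s^∞) ≺ δ(β)` for all `n ≥ 0`. -/
def IsBetaLyndon (β : ℝ) (s : List ℕ) : Prop :=
  s ≠ [] ∧ (∀ a ∈ s, a ≤ 1) ∧
  (∀ i, 1 ≤ i → i < s.length →
    seqLt (wordSeq (s.take (s.length - i))) (wordSeq (s.drop i))) ∧
  (∀ d : ℕ → ℕ, IsQuasiGreedy β d → ∀ n : ℕ, seqLt (shiftN n (perSeq s)) d)

/-- Left endpoint `t_L = Σ_{i=1}^p s_i β^{-i}` of the β-Lyndon interval generated by `s`. -/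
noncomputable def lyndonLeft (β : ℝ) (s : List ℕ) : ℝ :=
  ∑ i ∈ Finset.range s.length, (s.getD i 0 : ℝ) / β ^ (i + 1)

/-- Right endpoint `t_R = (β^p/(β^p - 1)) t_L` of the β-Lyndon interval generated by `s`. -/
noncomputable def lyndonRight (β : ℝ) (s : List ℕ) : ℝ :=
  β ^ s.length / (β ^ s.length - 1) * lyndonLeft β s

/-- The union of all β-Lyndon intervals `[t_L, t_R)`. -/
noncomputable def lyndonUnionIco (β : ℝ) : Set ℝ :=
  ⋃ s ∈ {s : List ℕ | IsBetaLyndon β s}, Set.Ico (lyndonLeft β s) (lyndonRight β s)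

/-- The symbolic survivor set `K̃_β(t)` with upper bound sequence `d = δ(β)`. -/
def Ktilde (β t : ℝ) (d : ℕ → ℕ) : Set (ℕ → ℕ) :=
  {x | (∀ i, x i ≤ 1) ∧ ∀ n : ℕ, seqLe (greedy β t) (shiftN n x) ∧ seqLe (shiftN n x) d}

/-- The set-valued bifurcation set `E_β`. -/
def Eset (β : ℝ) : Set ℝ :=
  {t | t ∈ Set.Ico (0 : ℝ) 1 ∧ ∀ t', t < t' → t' < 1 → Kset β t' ≠ Kset β t}

/-- The dimension bifurcation set `B_β`. -/
def Bset (β : ℝ) : Set ℝ :=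
  {t | t ∈ Set.Ico (0 : ℝ) 1 ∧ ∀ t', t < t' → t' < 1 → dimH (Kset β t') ≠ dimH (Kset β t)}

/-- `β` is a multinacci number: `β^{m+1} = β^m + ⋯ + β + 1` for some `m ≥ 1`. -/
def IsMultinacci (β : ℝ) : Prop :=
  ∃ m : ℕ, 1 ≤ m ∧ β ^ (m + 1) = ∑ i ∈ Finset.range (m + 1), β ^ i

/-!
If a sequence `c` and all its shifts lie strictly below an infinite expansion `d` of `1`, then
comparing `c` with `d` at their first disagreement shows that the excess `value c - 1` is less than
the excess of a later shift divided by a positive power of `β`. These excesses are bounded, so none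
of them is positive, all shifts of `c` have value less than `1`, and `c` is the greedy expansion of
its value. Hence `b(t_L) = s0^∞` and `b(t_R) = s^∞`. Finally, if every shift of `x` is at least
`s0^∞`, then every shift of `x` is at least `s^∞`: as soon as `σ^n x` agrees with the first period,
the comparison restarts at `σ^(n+p) x`, `p = |s|`. So `K̃_β(t_L) ⊆ K̃_β(t_R)`, and
monotonicity of the greedy expansion squeezes all the sets in between.
-/

section Lexicographic

variable {x y z : ℕ → ℕ}

lemma seqLe_iff_toLex_le : seqLe x y ↔ toLex x ≤ toLex y := by
  rw [le_iff_eq_or_lt, toLex_inj]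
  rfl

lemma not_seqLt_iff_seqLe : ¬seqLt y x ↔ seqLe x y := by
  rw [seqLe_iff_toLex_le]
  exact not_lt (a := toLex y) (b := toLex x)

lemma seqLe.trans (hxy : seqLe x y) (hyz : seqLe y z) : seqLe x z :=
  seqLe_iff_toLex_le.2 ((seqLe_iff_toLex_le.1 hxy).trans (seqLe_iff_toLex_le.1 hyz))

lemma seqLe.trans_seqLt (hxy : seqLe x y) (hyz : seqLt y z) : seqLt x z :=
  (seqLe_iff_toLex_le.1 hxy).trans_lt hyz

lemma seqLe_of_le (h : x ≤ y) : seqLe x y :=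
  seqLe_iff_toLex_le.2 (Pi.toLex_monotone h)

lemma seqLe_iff_forall_le : seqLe x y ↔ ∀ n, (∀ i < n, x i = y i) → x n ≤ y n := by
  rw [← not_seqLt_iff_seqLe]
  constructor
  · intro h n heq
    by_contra! hlt
    exact h ⟨n, fun i hi => (heq i hi).symm, hlt⟩
  · rintro h ⟨n, heq, hlt⟩
    exact hlt.not_ge (h n fun i hi => (heq i hi).symm)

lemma le_apply_zero_of_forall_shiftN_seqLt (h : ∀ n, seqLt (shiftN n x) y) (n : ℕ) :
    x n ≤ y 0 := by
  simpa [shiftN] using seqLe_iff_forall_le.1 (Or.inr (h n)) 0 (by simp)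

lemma shiftN_shiftN (m n : ℕ) (x : ℕ → ℕ) : shiftN m (shiftN n x) = shiftN (n + m) x := by
  funext i
  simp only [shiftN, add_assoc, add_comm m n]

end Lexicographic

section Value

variable {β : ℝ} {c d : ℕ → ℕ}

/-- The value `Σ_{i≥1} c_i β^{-i}` of a digit sequence in base `β`. The digit `c_i` of the usual
notation is `c (i - 1)`, and the value is `0` if the series diverges. -/
noncomputable def betaValue (β : ℝ) (c : ℕ → ℕ) : ℝ := ∑' i, (c i : ℝ) / β ^ (i + 1)

lemma summable_of_betaValue_ne_zero (h : betaValue β c ≠ 0) :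
    Summable fun i => (c i : ℝ) / β ^ (i + 1) :=
  of_not_not fun hc => h (tsum_eq_zero_of_not_summable hc)

lemma summable_digit_div_pow (hβ : 1 < β) {N : ℕ} (hc : ∀ i, c i ≤ N) :
    Summable fun i => (c i : ℝ) / β ^ (i + 1) := by
  have hβ₀ : 0 < β := one_pos.trans hβ
  have hgeom : Summable fun i : ℕ => (N : ℝ) * β⁻¹ ^ (i + 1) :=
    ((summable_nat_add_iff 1).2 <|
      summable_geometric_of_lt_one (inv_nonneg.2 hβ₀.le) (inv_lt_one_of_one_lt₀ hβ)).mul_left _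
  refine hgeom.of_nonneg_of_le (fun i => by positivity) fun i => ?_
  rw [inv_pow, ← div_eq_mul_inv]
  gcongr
  exact hc i

lemma betaValue_nonneg (hβ : 0 ≤ β) (c : ℕ → ℕ) : 0 ≤ betaValue β c :=
  tsum_nonneg fun _ => by positivity

lemma betaValue_mono (hβ : 0 ≤ β) (hc : Summable fun i => (c i : ℝ) / β ^ (i + 1))
    (hd : Summable fun i => (d i : ℝ) / β ^ (i + 1)) (h : c ≤ d) :
    betaValue β c ≤ betaValue β d :=
  hc.tsum_le_tsum (fun i => by gcongr; exact h i) hd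

lemma betaValue_eq_sum_add (hc : Summable fun i => (c i : ℝ) / β ^ (i + 1)) (n : ℕ) :
    betaValue β c =
      ∑ i ∈ Finset.range n, (c i : ℝ) / β ^ (i + 1) + betaValue β (shiftN n c) / β ^ n := by
  rw [betaValue, ← hc.sum_add_tsum_nat_add n, betaValue, ← tsum_div_const]
  congr! 3 with i
  rw [shiftN, div_div, ← pow_add, add_right_comm]

lemma summable_shiftN (hβ : β ≠ 0) (hc : Summable fun i => (c i : ℝ) / β ^ (i + 1)) (n : ℕ) :
    Summable fun i => (shiftN n c i : ℝ) / β ^ (i + 1) := by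
  refine (((summable_nat_add_iff n).2 hc).mul_right (β ^ n)).congr fun i => ?_
  rw [shiftN, add_right_comm, pow_add]
  field_simp

lemma betaValue_pos (hβ : 0 < β) (hc : Summable fun i => (c i : ℝ) / β ^ (i + 1)) {n : ℕ}
    (hn : c n ≠ 0) : 0 < betaValue β c := by
  have : 0 < c n := Nat.pos_of_ne_zero hn
  exact hc.tsum_pos (fun i => by positivity) n (by positivity)

lemma betaValue_shiftN_pos (hβ : 0 < β) (hc : Summable fun i => (c i : ℝ) / β ^ (i + 1))
    (hinf : ∃ᶠ n in atTop, c n ≠ 0) (n : ℕ) : 0 < betaValue β (shiftN n c) := by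
  obtain ⟨k, hnk, hk⟩ := frequently_atTop.1 hinf n
  refine betaValue_pos hβ (summable_shiftN hβ.ne' hc n) (n := k - n) ?_
  rwa [shiftN, Nat.sub_add_cancel hnk]

lemma mul_betaValue (hβ : β ≠ 0) (hc : Summable fun i => (c i : ℝ) / β ^ (i + 1)) :
    β * betaValue β c = c 0 + betaValue β (shiftN 1 c) := by
  rw [betaValue_eq_sum_add hc 1]
  simp only [Finset.sum_range_one, zero_add, pow_one]
  field_simp

end Value

section Comparison

variable {β : ℝ} {c d : ℕ → ℕ}

lemma exists_betaValue_sub_lt_of_seqLt (hβ : 0 < β)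
    (hc : Summable fun i => (c i : ℝ) / β ^ (i + 1))
    (hd : Summable fun i => (d i : ℝ) / β ^ (i + 1)) (hinf : ∃ᶠ n in atTop, d n ≠ 0)
    (h : seqLt c d) :
    ∃ k, betaValue β c - betaValue β d < (betaValue β (shiftN (k + 1) c) - 1) / β ^ (k + 1) := by
  obtain ⟨k, heq, hlt⟩ := h
  have hprefix : ∑ i ∈ Finset.range k, (c i : ℝ) / β ^ (i + 1) =
      ∑ i ∈ Finset.range k, (d i : ℝ) / β ^ (i + 1) :=
    Finset.sum_congr rfl fun i hi => by rw [heq i (Finset.mem_range.1 hi)]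
  have hdigit : (c k : ℝ) + 1 ≤ d k := mod_cast hlt
  have htail := betaValue_shiftN_pos hβ hd hinf (k + 1)
  refine ⟨k, ?_⟩
  calc betaValue β c - betaValue β d
      = (c k - d k + betaValue β (shiftN (k + 1) c) - betaValue β (shiftN (k + 1) d))
          / β ^ (k + 1) := by
        rw [betaValue_eq_sum_add hc (k + 1), betaValue_eq_sum_add hd (k + 1),
          Finset.sum_range_succ, Finset.sum_range_succ, hprefix]
        ring
    _ < (betaValue β (shiftN (k + 1) c) - 1) / β ^ (k + 1) := by
        exact div_lt_div_of_pos_right (by linarith) (by positivity)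

lemma nonpos_of_forall_exists_le_div_pow {ι : Type*} {u : ι → ℝ} (hβ : 1 < β)
    (hu : BddAbove (range u)) (h : ∀ i, ∃ j k, u i ≤ u j / β ^ (k + 1)) (i : ι) : u i ≤ 0 := by
  have : 0 < β := one_pos.trans hβ
  have : Nonempty ι := ⟨i⟩
  by_contra! hi
  have hsup : 0 < ⨆ j, u j := hi.trans_le (le_ciSup hu i)
  have hcontract : ⨆ j, u j ≤ (⨆ j, u j) / β := ciSup_le fun j => by
    obtain ⟨l, k, hl⟩ := h j
    calc u j ≤ u l / β ^ (k + 1) := hl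
      _ ≤ (⨆ j, u j) / β ^ (k + 1) := by gcongr; exact le_ciSup hu l
      _ ≤ (⨆ j, u j) / β := by gcongr; exact le_self_pow₀ hβ.le k.succ_ne_zero
  exact hcontract.not_gt (div_lt_self hsup hβ)

lemma betaValue_shiftN_lt_one (hβ : 1 < β) (hinf : ∃ᶠ n in atTop, d n ≠ 0)
    (hd : betaValue β d = 1) (h : ∀ n, seqLt (shiftN n c) d) (n : ℕ) :
    betaValue β (shiftN n c) < 1 := by
  have hβ₀ : 0 < β := one_pos.trans hβ
  have hbound := le_apply_zero_of_forall_shiftN_seqLt h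
  have hsum (n) : Summable fun i => (shiftN n c i : ℝ) / β ^ (i + 1) :=
    summable_digit_div_pow hβ fun i => hbound (i + n)
  have hbdd : BddAbove (range fun n => betaValue β (shiftN n c) - 1) := by
    refine ⟨betaValue β (fun _ => d 0) - 1, forall_mem_range.2 fun n => ?_⟩
    exact sub_le_sub_right (betaValue_mono hβ₀.le (hsum n)
      (summable_digit_div_pow hβ fun _ => le_rfl) fun i => hbound (i + n)) 1
  have hstep (n) : ∃ k, betaValue β (shiftN n c) - 1 <
      (betaValue β (shiftN (n + (k + 1)) c) - 1) / β ^ (k + 1) := by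
    have hd_sum := summable_of_betaValue_ne_zero (hd.trans_ne one_ne_zero)
    simpa only [shiftN_shiftN, hd] using
      exists_betaValue_sub_lt_of_seqLt hβ₀ (hsum n) hd_sum hinf (h n)
  have hnonpos := nonpos_of_forall_exists_le_div_pow hβ hbdd fun n =>
    (hstep n).elim fun k hk => ⟨_, k, hk.le⟩
  obtain ⟨k, hk⟩ := hstep n
  exact sub_neg.1 (hk.trans_le (div_nonpos_of_nonpos_of_nonneg (hnonpos _) (by positivity)))

end Comparison

section Greedy

variable {β : ℝ} {c d : ℕ → ℕ}

lemma floor_mul_betaValue (hβ : 0 < β) (hc : Summable fun i => (c i : ℝ) / β ^ (i + 1))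
    (h : betaValue β (shiftN 1 c) < 1) : ⌊β * betaValue β c⌋ = c 0 := by
  rw [mul_betaValue hβ.ne' hc, Int.floor_natCast_add,
    Int.floor_eq_zero_iff.2 ⟨betaValue_nonneg hβ.le _, h⟩, add_zero]

lemma Tbeta_betaValue (hβ : 0 < β) (hc : Summable fun i => (c i : ℝ) / β ^ (i + 1))
    (h : betaValue β (shiftN 1 c) < 1) : Tbeta β (betaValue β c) = betaValue β (shiftN 1 c) := by
  rw [Tbeta, mul_betaValue hβ.ne' hc, Int.fract_natCast_add,
    Int.fract_eq_self.2 ⟨betaValue_nonneg hβ.le _, h⟩]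

lemma iterate_Tbeta_betaValue (hβ : 0 < β) (hc : Summable fun i => (c i : ℝ) / β ^ (i + 1))
    (h : ∀ n, betaValue β (shiftN n c) < 1) (n : ℕ) :
    (Tbeta β)^[n] (betaValue β c) = betaValue β (shiftN n c) := by
  induction n with
  | zero => rfl
  | succ n ih =>
    have hlt : betaValue β (shiftN 1 (shiftN n c)) < 1 := shiftN_shiftN 1 n c ▸ h (n + 1)
    rw [Function.iterate_succ_apply', ih, Tbeta_betaValue hβ (summable_shiftN hβ.ne' hc n) hlt,
      shiftN_shiftN]

lemma greedy_betaValue (hβ : 0 < β) (hc : Summable fun i => (c i : ℝ) / β ^ (i + 1))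
    (h : ∀ n, betaValue β (shiftN n c) < 1) : greedy β (betaValue β c) = c := by
  funext n
  have hlt : betaValue β (shiftN 1 (shiftN n c)) < 1 := shiftN_shiftN 1 n c ▸ h (n + 1)
  rw [greedy, iterate_Tbeta_betaValue hβ hc h,
    floor_mul_betaValue hβ (summable_shiftN hβ.ne' hc n) hlt, Int.toNat_natCast, shiftN, zero_add]

lemma greedy_betaValue_of_forall_shiftN_seqLt (hβ : 1 < β) (hinf : ∃ᶠ n in atTop, d n ≠ 0)
    (hd : betaValue β d = 1) (h : ∀ n, seqLt (shiftN n c) d) : greedy β (betaValue β c) = c :=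
  greedy_betaValue (one_pos.trans hβ)
    (summable_digit_div_pow hβ (le_apply_zero_of_forall_shiftN_seqLt h))
    (betaValue_shiftN_lt_one hβ hinf hd h)

lemma iterate_Tbeta_nonneg {t : ℝ} (ht : 0 ≤ t) (n : ℕ) : 0 ≤ (Tbeta β)^[n] t := by
  cases n with
  | zero => exact ht
  | succ n =>
    rw [Function.iterate_succ_apply']
    exact Int.fract_nonneg _

lemma floor_eq_of_greedy_eq (hβ : 0 ≤ β) {a b : ℝ} (ha : 0 ≤ a) (hb : 0 ≤ b) {n : ℕ}
    (h : greedy β a n = greedy β b n) :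
    ⌊β * (Tbeta β)^[n] a⌋ = ⌊β * (Tbeta β)^[n] b⌋ := by
  have hfloor {t : ℝ} (ht : 0 ≤ t) : 0 ≤ ⌊β * (Tbeta β)^[n] t⌋ :=
    Int.floor_nonneg.2 (mul_nonneg hβ (iterate_Tbeta_nonneg ht n))
  rw [← Int.toNat_of_nonneg (hfloor ha), ← Int.toNat_of_nonneg (hfloor hb)]
  exact congrArg Nat.cast h

lemma iterate_Tbeta_le_of_greedy_eq (hβ : 0 ≤ β) {a b : ℝ} (ha : 0 ≤ a) (hab : a ≤ b) {n : ℕ}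
    (h : ∀ i < n, greedy β a i = greedy β b i) : (Tbeta β)^[n] a ≤ (Tbeta β)^[n] b := by
  induction n with
  | zero => exact hab
  | succ n ih =>
    have hle := ih fun i hi => h i (hi.trans n.lt_succ_self)
    rw [Function.iterate_succ_apply', Function.iterate_succ_apply', Tbeta, Tbeta, Int.fract,
      Int.fract, floor_eq_of_greedy_eq hβ ha (ha.trans hab) (h n n.lt_succ_self)]
    gcongr

lemma greedy_seqLe_greedy (hβ : 0 ≤ β) {a b : ℝ} (ha : 0 ≤ a) (hab : a ≤ b) :
    seqLe (greedy β a) (greedy β b) :=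
  seqLe_iff_forall_le.2 fun _ heq => Int.toNat_le_toNat <| Int.floor_mono <|
    mul_le_mul_of_nonneg_left (iterate_Tbeta_le_of_greedy_eq hβ ha hab heq) hβ

lemma Ktilde_antitoneOn (hβ : 0 ≤ β) (d : ℕ → ℕ) :
    AntitoneOn (fun t => Ktilde β t d) (Ici 0) := fun _ ha _ _ hab _ hx =>
  ⟨hx.1, fun n => ⟨(greedy_seqLe_greedy hβ ha hab).trans (hx.2 n).1, (hx.2 n).2⟩⟩

end Greedy

section Words

variable {β : ℝ} {s : List ℕ} {d : ℕ → ℕ}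

lemma perSeq_eq_wordSeq {i : ℕ} (hi : i < s.length) : perSeq s i = wordSeq s i := by
  rw [perSeq, wordSeq, Nat.mod_eq_of_lt hi]

lemma wordSeq_eq_zero {i : ℕ} (hi : s.length ≤ i) : wordSeq s i = 0 :=
  List.getD_eq_default _ _ hi

lemma perSeq_add_length (s : List ℕ) (i : ℕ) : perSeq s (i + s.length) = perSeq s i := by
  rw [perSeq, perSeq, Nat.add_mod_right]

lemma wordSeq_le_perSeq (s : List ℕ) : wordSeq s ≤ perSeq s := fun i => by
  rcases lt_or_ge i s.length with hi | hi
  · exact (perSeq_eq_wordSeq hi).ge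
  · exact (wordSeq_eq_zero hi).trans_le (Nat.zero_le _)

lemma wordSeq_le_sum (s : List ℕ) (i : ℕ) : wordSeq s i ≤ s.sum := by
  rcases lt_or_ge i s.length with hi | hi
  · rw [wordSeq, List.getD_eq_getElem _ _ hi]
    exact List.le_sum_of_mem (List.getElem_mem hi)
  · exact (wordSeq_eq_zero hi).trans_le (Nat.zero_le _)

lemma sum_range_perSeq_div_pow (β : ℝ) (s : List ℕ) :
    ∑ i ∈ Finset.range s.length, (perSeq s i : ℝ) / β ^ (i + 1) = lyndonLeft β s :=
  Finset.sum_congr rfl fun i hi => by rw [perSeq_eq_wordSeq (Finset.mem_range.1 hi), wordSeq]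

lemma betaValue_wordSeq (β : ℝ) (s : List ℕ) : betaValue β (wordSeq s) = lyndonLeft β s :=
  tsum_eq_sum fun i hi => by
    rw [wordSeq_eq_zero (not_lt.1 (Finset.mem_range.not.1 hi)), Nat.cast_zero, zero_div]

lemma betaValue_perSeq (hβ : 1 < β) (hs : s ≠ []) :
    betaValue β (perSeq s) = lyndonRight β s := by
  have hsum : Summable fun i => (perSeq s i : ℝ) / β ^ (i + 1) :=
    summable_digit_div_pow hβ fun i => wordSeq_le_sum s (i % s.length)
  have hperiod : shiftN s.length (perSeq s) = perSeq s := funext (perSeq_add_length s)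
  have hrenewal := betaValue_eq_sum_add hsum s.length
  rw [hperiod, sum_range_perSeq_div_pow] at hrenewal
  have hpow : 1 < β ^ s.length := one_lt_pow₀ hβ (List.length_eq_zero_iff.not.2 hs)
  have hsub : β ^ s.length - 1 ≠ 0 := (sub_pos.2 hpow).ne'
  have hpow₀ : β ^ s.length ≠ 0 := (one_pos.trans hpow).ne'
  rw [lyndonRight]
  field_simp at hrenewal ⊢
  linarith

lemma lyndonLeft_nonneg (hβ : 0 ≤ β) (s : List ℕ) : 0 ≤ lyndonLeft β s :=
  betaValue_wordSeq β s ▸ betaValue_nonneg hβ _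

lemma perSeq_le_apply_add_of_eq (hs : s ≠ []) {x : ℕ → ℕ}
    (h : ∀ n, seqLe (wordSeq s) (shiftN n x)) (j n : ℕ)
    (heq : ∀ i < j, perSeq s i = x (i + n)) : perSeq s j ≤ x (j + n) := by
  induction j using Nat.strong_induction_on generalizing n with
  | _ j ih =>
    rcases lt_or_ge j s.length with hj | hj
    · rw [perSeq_eq_wordSeq hj]
      exact seqLe_iff_forall_le.1 (h n) j fun i hi =>
        (perSeq_eq_wordSeq (hi.trans hj)).symm.trans (heq i hi)
    · obtain ⟨k, rfl⟩ := Nat.exists_eq_add_of_le' hj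
      have hpos : 0 < s.length := List.length_pos_of_ne_nil hs
      rw [perSeq_add_length, add_assoc]
      refine ih k (by lia) (s.length + n) fun i hi => ?_
      rw [← perSeq_add_length, heq _ (by lia), add_assoc]

lemma perSeq_seqLe_shiftN (hs : s ≠ []) {x : ℕ → ℕ}
    (h : ∀ n, seqLe (wordSeq s) (shiftN n x)) (n : ℕ) : seqLe (perSeq s) (shiftN n x) :=
  seqLe_iff_forall_le.2 fun j => perSeq_le_apply_add_of_eq hs h j n

lemma shiftN_wordSeq_seqLt (h : ∀ n, seqLt (shiftN n (perSeq s)) d) (n : ℕ) :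
    seqLt (shiftN n (wordSeq s)) d :=
  (seqLe_of_le fun i => wordSeq_le_perSeq s (i + n)).trans_seqLt (h n)

end Words

section LyndonInterval

variable {β : ℝ} {s : List ℕ} {d : ℕ → ℕ}

lemma greedy_lyndonLeft (hβ : 1 < β) (hinf : ∃ᶠ n in atTop, d n ≠ 0) (hd : betaValue β d = 1)
    (h : ∀ n, seqLt (shiftN n (perSeq s)) d) : greedy β (lyndonLeft β s) = wordSeq s :=
  betaValue_wordSeq β s ▸
    greedy_betaValue_of_forall_shiftN_seqLt hβ hinf hd (shiftN_wordSeq_seqLt h)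

lemma greedy_lyndonRight (hβ : 1 < β) (hinf : ∃ᶠ n in atTop, d n ≠ 0) (hd : betaValue β d = 1)
    (hs : s ≠ []) (h : ∀ n, seqLt (shiftN n (perSeq s)) d) :
    greedy β (lyndonRight β s) = perSeq s :=
  betaValue_perSeq hβ hs ▸ greedy_betaValue_of_forall_shiftN_seqLt hβ hinf hd h

lemma Ktilde_lyndonLeft_subset_Ktilde_lyndonRight (hβ : 1 < β) (hinf : ∃ᶠ n in atTop, d n ≠ 0)
    (hd : betaValue β d = 1) (hs : s ≠ []) (h : ∀ n, seqLt (shiftN n (perSeq s)) d) :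
    Ktilde β (lyndonLeft β s) d ⊆ Ktilde β (lyndonRight β s) d := by
  intro x hx
  simp only [Ktilde, mem_ofPred_eq, greedy_lyndonLeft hβ hinf hd h,
    greedy_lyndonRight hβ hinf hd hs h] at hx ⊢
  exact ⟨hx.1, fun n => ⟨perSeq_seqLe_shiftN hs (fun k => (hx.2 k).1) n, (hx.2 n).2⟩⟩

theorem stmt_5_general (hβ : 1 < β) (hinf : ∃ᶠ n in atTop, d n ≠ 0) (hd : betaValue β d = 1)
    (hs : s ≠ []) (h : ∀ n, seqLt (shiftN n (perSeq s)) d) :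
    ∀ t ∈ Icc (lyndonLeft β s) (lyndonRight β s),
      Ktilde β t d = Ktilde β (lyndonLeft β s) d ∧
      Ktilde β t d = Ktilde β (lyndonRight β s) d := by
  intro t ht
  have hβ₀ : 0 ≤ β := (one_pos.trans hβ).le
  have hL : 0 ≤ lyndonLeft β s := lyndonLeft_nonneg hβ₀ s
  have ht₀ : 0 ≤ t := hL.trans ht.1
  have hRt : Ktilde β (lyndonRight β s) d ⊆ Ktilde β t d :=
    Ktilde_antitoneOn hβ₀ d ht₀ (ht₀.trans ht.2) ht.2
  have htL : Ktilde β t d ⊆ Ktilde β (lyndonLeft β s) d :=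
    Ktilde_antitoneOn hβ₀ d hL ht₀ ht.1
  have hLR := Ktilde_lyndonLeft_subset_Ktilde_lyndonRight hβ hinf hd hs h
  exact ⟨htL.antisymm (hLR.trans hRt), (htL.trans hLR).antisymm hRt⟩

end LyndonInterval

/-- Let `β ∈ (1,2)` with `δ(β) = (1^m 0)^∞` for some `m ≥ 1` and let
`[t_L, t_R) ⊆ [0, 1 - 1/β)` be a β-Lyndon interval. Then `t ↦ K̃_β(t)` is constant
on `[t_L, t_R]`; in particular `K̃_β(t) = K̃_β(t_L) = K̃_β(t_R)` on `[t_L, t_R]`. -/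
theorem stmt_5 (β : ℝ) (hβ : β ∈ Set.Ioo (1 : ℝ) 2) (m : ℕ) (hm : 1 ≤ m)
    (hδ : IsQuasiGreedy β (perSeq (List.replicate m 1 ++ [0])))
    (s : List ℕ) (hs : IsBetaLyndon β s)
    (hsub : Set.Ico (lyndonLeft β s) (lyndonRight β s) ⊆ Set.Ico (0 : ℝ) (1 - 1 / β)) :
    ∀ t ∈ Set.Icc (lyndonLeft β s) (lyndonRight β s),
      Ktilde β t (perSeq (List.replicate m 1 ++ [0])) =
        Ktilde β (lyndonLeft β s) (perSeq (List.replicate m 1 ++ [0])) ∧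
      Ktilde β t (perSeq (List.replicate m 1 ++ [0])) =
        Ktilde β (lyndonRight β s) (perSeq (List.replicate m 1 ++ [0])) :=
  stmt_5_general hβ.1 (by simpa [frequently_atTop] using hδ.2.1) hδ.2.2.1 hs.1 (hs.2.2.2 _ hδ)
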